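/- Let 1 ≤ q < p < ∞, let μ, ν be positive measures on (X, 𝒯) with 0 < μ(I) < ∞ and ν(I) < ∞ for all I ∈ 𝓛, and let α = {α_I : I ∈ 𝓛} be nonnegative constants. Let N := sup over nonnegative f with ‖f‖_{L^p(μ)} = 1 of (∫_X (Σ_{I ∈ 𝓛} |α_I E_I^μ f|^q)^{p/q} dν)^{1/p} be the vector-valued operator norm. Then N^q is comparable, with constants depending only on p and q, to sup over nonnegative f with ‖f‖_{L^p(μ)} = 1 and nonnegative g with ‖g‖_{L^{(p/q)'}(ν)} = 1 of ∫_X (Σ_{I ∈ 𝓛} α_I^q · E_I^μ(f^q)) g dν. -/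

import Mathlib

open MeasureTheory ENNReal NNReal Set Filter

/-- A lattice of measurable sets on a measurable space `X`: a union of countable
generations, each generation being a countable disjoint cover of `X`, and each set of
generation `n` being a (countable) disjoint union of sets of generation `n+1`. -/
structure LatticeFamily (X : Type*) [MeasurableSpace X] where
  gen : ℤ → Set (Set X)
  countable : ∀ n, (gen n).Countable
  meas : ∀ n, ∀ I ∈ gen n, MeasurableSet I
  pairwiseDisjoint : ∀ n, (gen n).PairwiseDisjoint id
  cover : ∀ n, ⋃₀ gen n = univ
  subdiv : ∀ n, ∀ I ∈ gen n, ∃ S ⊆ gen (n + 1), I = ⋃₀ S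

/-- The collection of all sets of the lattice. -/
def LatticeFamily.sets {X : Type*} [MeasurableSpace X] (L : LatticeFamily X) : Set (Set X) :=
  ⋃ n, L.gen n

/-- The averaging operator `E_I^μ f = (μ(I)⁻¹ ∫_I f dμ) · 1_I`. -/
noncomputable def avgOp {X : Type*} [MeasurableSpace X] (μ : Measure X) (I : Set X)
    (f : X → ℝ≥0∞) : X → ℝ≥0∞ :=
  I.indicator fun _ => (∫⁻ y in I, f y ∂μ) / μ I

/-- The lattice maximal function `M_μ f(x) = sup {E_I^μ f(x) : I ∈ 𝓛, x ∈ I}`. -/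
noncomputable def maxOp {X : Type*} [MeasurableSpace X] (L : LatticeFamily X) (μ : Measure X)
    (f : X → ℝ≥0∞) : X → ℝ≥0∞ := fun x =>
  ⨆ (I : Set X) (_ : I ∈ L.sets ∧ x ∈ I), (∫⁻ y in I, f y ∂μ) / μ I


theorem lat_nested {X : Type*} [MeasurableSpace X] (L : LatticeFamily X) (n : ℤ) (I : Set X)
    (hI : I ∈ L.gen n) (m : ℤ) (hnm : n ≤ m) : ∀ J ∈ L.gen m, J ⊆ I ∨ Disjoint J I := by
  induction m, hnm using Int.leInduction with
  | base =>
    intro J hJ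
    by_cases h : J = I
    · exact Or.inl h.subset
    · exact Or.inr (L.pairwiseDisjoint n hJ hI h)
  | succ m hm ih =>
    intro J hJ
    by_cases hd : Disjoint J I
    · exact Or.inr hd
    left
    obtain ⟨x, hxJ, hxI⟩ := Set.not_disjoint_iff.1 hd
    have hx : x ∈ ⋃₀ L.gen m := by rw [L.cover]; trivial
    obtain ⟨K, hK, hxK⟩ := hx
    have hKI : K ⊆ I := (ih K hK).resolve_right (Set.not_disjoint_iff.2 ⟨x, hxK, hxI⟩)
    obtain ⟨S, hS, rfl⟩ := L.subdiv m K hK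
    obtain ⟨J', hJ', hxJ'⟩ := hxK
    have : J' = J := by
      by_contra hne
      exact Set.disjoint_left.1 (L.pairwiseDisjoint (m+1) (hS hJ') hJ hne) hxJ' hxJ
    subst this
    exact (Set.subset_sUnion_of_mem hJ').trans hKI

theorem lat_laminar {X : Type*} [MeasurableSpace X] (L : LatticeFamily X) (I J : Set X)
    (hI : I ∈ L.sets) (hJ : J ∈ L.sets) : I ⊆ J ∨ J ⊆ I ∨ Disjoint I J := by
  obtain ⟨n, hn⟩ := Set.mem_iUnion.1 hI
  obtain ⟨m, hm⟩ := Set.mem_iUnion.1 hJ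
  rcases le_total n m with h | h
  · rcases lat_nested L n I hn m h J hm with h | h
    · exact Or.inr (Or.inl h)
    · exact Or.inr (Or.inr h.symm)
  · rcases lat_nested L m J hm n h I hn with h | h
    · exact Or.inl h
    · exact Or.inr (Or.inr h)

theorem lat_countable {X : Type*} [MeasurableSpace X] (L : LatticeFamily X) : L.sets.Countable :=
  Set.countable_iUnion L.countable

theorem lat_meas {X : Type*} [MeasurableSpace X] (L : LatticeFamily X) (I : Set X)
    (hI : I ∈ L.sets) : MeasurableSet I := by
  obtain ⟨n, hn⟩ := Set.mem_iUnion.1 hI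
  exact L.meas n I hn

theorem weak_fin {X : Type*} [MeasurableSpace X] (L : LatticeFamily X) (μ : Measure X)
    (h : X → ℝ≥0∞) (a : ℝ≥0∞) (N : ℕ) : ∀ T : Finset (Set X), T.card = N →
    (∀ I ∈ T, I ∈ L.sets) → (∀ I ∈ T, a * μ I ≤ ∫⁻ x in I, h x ∂μ) →
    a * μ (⋃ I ∈ T, I) ≤ ∫⁻ x, h x ∂μ := by
  classical
  induction N using Nat.strong_induction_on with
  | _ N ih =>
  intro T hT hL hav
  by_cases hex : ∃ I ∈ T, ∃ J ∈ T, I ≠ J ∧ I ⊆ J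
  · obtain ⟨I, hI, J, hJ, hne, hIJ⟩ := hex
    have hU : (⋃ K ∈ T, K) = ⋃ K ∈ T.erase I, K := by
      ext x
      simp only [Set.mem_iUnion, Finset.mem_erase, exists_prop]
      constructor
      · rintro ⟨K, hK, hx⟩
        by_cases hKI : K = I
        · exact ⟨J, ⟨hne.symm, hJ⟩, hIJ (hKI ▸ hx)⟩
        · exact ⟨K, ⟨hKI, hK⟩, hx⟩
      · rintro ⟨K, hK, hx⟩
        exact ⟨K, hK.2, hx⟩
    rw [hU]
    exact ih _ (hT ▸ Finset.card_erase_lt_of_mem hI) (T.erase I) rfl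
      (fun K hK => hL K (Finset.mem_of_mem_erase hK))
      (fun K hK => hav K (Finset.mem_of_mem_erase hK))
  · push Not at hex
    have hd : (T : Set (Set X)).PairwiseDisjoint (fun I => I) := by
      intro I hI J hJ hne
      rcases lat_laminar L I J (hL I hI) (hL J hJ) with h | h | h
      · exact absurd h (hex I hI J hJ hne)
      · exact absurd h (hex J hJ I hI hne.symm)
      · exact h
    rw [measure_biUnion_finset hd (fun I hI => lat_meas L I (hL I hI)), Finset.mul_sum]
    calc _ ≤ ∑ I ∈ T, ∫⁻ x in I, h x ∂μ := Finset.sum_le_sum hav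
      _ = ∫⁻ x in ⋃ I ∈ T, I, h x ∂μ :=
        (lintegral_biUnion_finset hd (fun I hI => lat_meas L I (hL I hI)) h).symm
      _ ≤ _ := setLIntegral_le_lintegral _ _

theorem weak_count {X : Type*} [MeasurableSpace X] (L : LatticeFamily X) (μ : Measure X)
    (h : X → ℝ≥0∞) (a : ℝ≥0∞) (G : Set (Set X)) (hG : G ⊆ L.sets)
    (hav : ∀ I ∈ G, a * μ I ≤ ∫⁻ x in I, h x ∂μ) :
    a * μ (⋃ I ∈ G, I) ≤ ∫⁻ x, h x ∂μ := by
  classical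
  have : Countable G := ((lat_countable L).mono hG).to_subtype
  have hU : (⋃ I ∈ G, I) = ⋃ T : Finset G, ⋃ I ∈ T.map (Function.Embedding.subtype _), I := by
    ext x
    simp only [Set.mem_iUnion, exists_prop, Finset.mem_map]
    constructor
    · rintro ⟨I, hI, hx⟩
      exact ⟨{⟨I, hI⟩}, I, ⟨⟨I, hI⟩, by simp, rfl⟩, hx⟩
    · rintro ⟨T, I, ⟨J, hJ, rfl⟩, hx⟩
      exact ⟨J, J.2, hx⟩
  rw [hU, Directed.measure_iUnion, ENNReal.mul_iSup]
  · refine iSup_le fun T => ?_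
    refine weak_fin L μ h a _ _ rfl ?_ ?_
    · intro I hI
      obtain ⟨J, hJ, rfl⟩ := Finset.mem_map.1 hI
      exact hG J.2
    · intro I hI
      obtain ⟨J, hJ, rfl⟩ := Finset.mem_map.1 hI
      exact hav _ J.2
  · apply Monotone.directed_le
    intro S T hST
    exact Set.biUnion_subset_biUnion_left (Finset.map_subset_map.2 hST)

theorem lower_dyadic (r : ℝ) (hr : 0 < r) (a : ℝ≥0∞) :
    a ^ r ≤ ∑' k : ℤ, (2 * (2:ℝ≥0∞) ^ k) ^ r * (if (2:ℝ≥0∞) ^ k < a then 1 else 0) := by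
  by_cases h0 : a = 0
  · simp [h0, hr]
  by_cases ht : a = ∞
  · subst ht
    have hlt : ∀ k : ℤ, (2:ℝ≥0∞) ^ k < ∞ := fun k => ENNReal.zpow_lt_top (by simp) (by simp) k
    have : (∑' k : ℤ, (2 * (2:ℝ≥0∞) ^ k) ^ r * (if (2:ℝ≥0∞) ^ k < ∞ then 1 else 0)) = ∞ := by
      rw [eq_top_iff]
      calc (∞:ℝ≥0∞) = ∑' n : ℕ, (1:ℝ≥0∞) :=
            (ENNReal.tsum_const_eq_top_of_ne_zero one_ne_zero).symm
        _ ≤ ∑' n : ℕ, (2 * (2:ℝ≥0∞) ^ (n:ℤ)) ^ r * (if (2:ℝ≥0∞) ^ (n:ℤ) < ∞ then 1 else 0) := by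
            refine ENNReal.tsum_le_tsum fun n => ?_
            rw [if_pos (hlt _), mul_one]
            refine ENNReal.one_le_rpow ?_ hr
            rw [zpow_natCast, ← pow_succ']
            exact one_le_pow₀ (by norm_num)
        _ ≤ _ := ENNReal.tsum_comp_le_tsum_of_injective Nat.cast_injective
            (fun k : ℤ => (2 * (2:ℝ≥0∞) ^ k) ^ r * (if (2:ℝ≥0∞) ^ k < ∞ then 1 else 0))
    rw [this]; exact le_top
  · obtain ⟨K, hK1, hK2⟩ := ENNReal.exists_mem_Ioc_zpow h0 ht (y := 2) (by norm_num) (by simp)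
    refine le_trans ?_ (ENNReal.le_tsum K)
    rw [if_pos hK1, mul_one]
    refine ENNReal.rpow_le_rpow ?_ hr.le
    rwa [ENNReal.zpow_add (by simp) (by simp), zpow_one, mul_comm] at hK2

theorem upper_dyadic (s : ℝ) (hs : 0 < s) (t : ℝ≥0∞) (h0 : t ≠ 0) (ht : t ≠ ∞) :
    ∑' k : ℤ, ((2:ℝ≥0∞) ^ k) ^ s * (if (2:ℝ≥0∞) ^ k < 2 * t then 1 else 0)
      ≤ (2:ℝ≥0∞) ^ s * (1 - ((2:ℝ≥0∞)⁻¹) ^ s)⁻¹ * t ^ s := by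
  obtain ⟨K, hK1, hK2⟩ := ENNReal.exists_mem_Ico_zpow h0 ht (y := 2) (by norm_num) (by simp)
  have hinj : Function.Injective (fun j : ℕ => K + 1 - (j:ℤ)) := by
    intro a b h; simpa using h
  rw [← hinj.tsum_eq]
  · calc _ ≤ ∑' j : ℕ, (2:ℝ≥0∞) ^ s * t ^ s * (((2:ℝ≥0∞)⁻¹) ^ s) ^ j := by
          refine ENNReal.tsum_le_tsum fun j => ?_
          calc _ ≤ ((2:ℝ≥0∞) ^ (K + 1 - (j:ℤ))) ^ s * 1 := by gcongr; split_ifs <;> simp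
            _ = ((2:ℝ≥0∞) ^ s) * ((2:ℝ≥0∞)^K) ^ s * (((2:ℝ≥0∞)⁻¹) ^ s) ^ j := by
              rw [mul_one, ← ENNReal.rpow_natCast, ← ENNReal.rpow_mul, mul_comm s, ENNReal.rpow_mul,
                ← ENNReal.mul_rpow_of_nonneg _ _ hs.le, ← ENNReal.mul_rpow_of_nonneg _ _ hs.le,
                ENNReal.rpow_natCast]
              congr 1
              rw [sub_eq_add_neg, ENNReal.zpow_add (by simp) (by simp),
                ENNReal.zpow_add (by simp) (by simp), zpow_one, ENNReal.zpow_neg, zpow_natCast,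
                ENNReal.inv_pow, mul_comm 2]
            _ ≤ _ := by gcongr
      _ = _ := by
          rw [ENNReal.tsum_mul_left, ENNReal.tsum_geometric]; ring
  · intro k hk
    have hk' : (2:ℝ≥0∞) ^ k < 2 * t := by
      by_contra h
      simp [h] at hk
    refine ⟨(K + 1 - k).toNat, ?_⟩
    have : (2:ℝ≥0∞) ^ k < 2 ^ (K + 2) := by
      refine hk'.trans_le ?_
      calc 2 * t ≤ 2 * 2 ^ (K+1) := by gcongr
        _ = _ := by
          rw [show K + 2 = 1 + (K + 1) by ring, ENNReal.zpow_add (by simp) (by simp) 1, zpow_one]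
    have hlt : k < K + 2 := by
      by_contra hge
      exact absurd this (not_lt.2 (ENNReal.zpow_le_of_le (by norm_num) (not_lt.1 hge)))
    have : ((K + 1 - k).toNat : ℤ) = K + 1 - k := Int.toNat_of_nonneg (by linarith)
    simp only [this]; ring

noncomputable def latM {X : Type*} [MeasurableSpace X] (L : LatticeFamily X) (μ : Measure X)
    (f : X → ℝ≥0∞) : X → ℝ≥0∞ := fun x => ⨆ I : L.sets, avgOp μ I.1 f x

theorem avgOp_meas {X : Type*} [MeasurableSpace X] (μ : Measure X) (I : Set X)
    (hI : MeasurableSet I) (f : X → ℝ≥0∞) : Measurable (avgOp μ I f) :=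
  measurable_const.indicator hI

theorem latM_meas {X : Type*} [MeasurableSpace X] (L : LatticeFamily X) (μ : Measure X)
    (f : X → ℝ≥0∞) : Measurable (latM L μ f) := by
  have : Countable L.sets := (lat_countable L).to_subtype
  exact Measurable.iSup fun I => avgOp_meas μ I.1 (lat_meas L _ I.2) f

theorem latM_weak {X : Type*} [MeasurableSpace X] (L : LatticeFamily X) (μ : Measure X)
    (hμ : ∀ I ∈ L.sets, 0 < μ I ∧ μ I < ∞)
    (f : X → ℝ≥0∞) (hf : Measurable f) (a : ℝ≥0∞) (ha : a ≠ ∞) :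
    a / 2 * μ {x | a < latM L μ f x} ≤ ∫⁻ x, f x * (if a < 2 * f x then 1 else 0) ∂μ := by
  have hsub : {x | a < latM L μ f x} ⊆
      ⋃ I ∈ {I | I ∈ L.sets ∧ a < (∫⁻ y in I, f y ∂μ) / μ I}, I := by
    intro x hx
    obtain ⟨I, hI⟩ := lt_iSup_iff.1 (show a < ⨆ I : L.sets, avgOp μ I.1 f x from hx)
    by_cases hxI : x ∈ I.1
    · rw [avgOp, Set.indicator_of_mem hxI] at hI
      exact Set.mem_biUnion (show I.1 ∈ {I | I ∈ L.sets ∧ a < (∫⁻ y in I, f y ∂μ) / μ I} from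
        ⟨I.2, hI⟩) hxI
    · rw [avgOp, Set.indicator_of_notMem hxI] at hI
      exact absurd hI _root_.not_lt_zero
  refine le_trans (mul_le_mul_right (measure_mono hsub) _) ?_
  refine weak_count L μ _ _ _ (fun I hI => hI.1) ?_
  rintro I ⟨hI, haI⟩
  obtain ⟨h0, ht⟩ := hμ I hI
  have h1 : a * μ I ≤ ∫⁻ y in I, f y ∂μ :=
    (ENNReal.le_div_iff_mul_le (Or.inl h0.ne') (Or.inl ht.ne)).1 haI.le
  have h2 : ∫⁻ y in I, f y ∂μ ≤
      ∫⁻ x in I, f x * (if a < 2 * f x then 1 else 0) ∂μ + a / 2 * μ I := by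
    rw [← setLIntegral_const, ← lintegral_add_right _ measurable_const]
    refine lintegral_mono fun x => ?_
    dsimp only
    split_ifs with h
    · simp
    · rw [mul_zero, zero_add, ENNReal.le_div_iff_mul_le (by simp) (by simp), mul_comm]
      exact not_lt.1 h
  refine ENNReal.le_of_add_le_add_right (a := a / 2 * μ I) ?_ ?_
  · exact ENNReal.mul_ne_top (ENNReal.div_lt_top ha (by simp)).ne ht.ne
  · rw [← add_mul, ENNReal.add_halves]
    exact h1.trans h2

theorem latM_strong {X : Type*} [MeasurableSpace X] (L : LatticeFamily X) (μ : Measure X)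
    (hμ : ∀ I ∈ L.sets, 0 < μ I ∧ μ I < ∞) (r : ℝ) (hr : 1 < r)
    (f : X → ℝ≥0∞) (hf : Measurable f) :
    ∫⁻ x, latM L μ f x ^ r ∂μ ≤
      ((2:ℝ≥0∞) ^ r * 2 * ((2:ℝ≥0∞) ^ (r-1) * (1 - ((2:ℝ≥0∞)⁻¹) ^ (r-1))⁻¹))
        * ∫⁻ x, f x ^ r ∂μ := by
  have hM := latM_meas L μ f
  have hr0 : 0 < r := by linarith
  set A : ℝ≥0∞ := (2:ℝ≥0∞) ^ r * 2
  set B : ℝ≥0∞ := (2:ℝ≥0∞) ^ (r-1) * (1 - ((2:ℝ≥0∞)⁻¹) ^ (r-1))⁻¹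
  have hB0 : B ≠ 0 := by
    refine mul_ne_zero ?_ ?_
    · exact (ENNReal.rpow_pos (by simp) (by simp)).ne'
    · exact ENNReal.inv_ne_zero.2 (ENNReal.sub_ne_top (by simp))
  have hA0 : A ≠ 0 := mul_ne_zero (ENNReal.rpow_pos (by simp) (by simp)).ne' (by simp)
  have hmi : ∀ k : ℤ, Measurable (fun x => if (2:ℝ≥0∞)^k < 2 * f x then (1:ℝ≥0∞) else 0) :=
    fun k => Measurable.ite (measurableSet_lt measurable_const (hf.const_mul 2))
        measurable_const measurable_const
  have hlt : ∀ k : ℤ, (2:ℝ≥0∞) ^ k < ∞ := fun k => ENNReal.zpow_lt_top (by simp) (by simp) k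
  have hpos : ∀ k : ℤ, 0 < (2:ℝ≥0∞) ^ k := fun k => ENNReal.zpow_pos (by simp) (by simp) k
  calc ∫⁻ x, latM L μ f x ^ r ∂μ
      ≤ ∫⁻ x, ∑' k : ℤ, (2 * (2:ℝ≥0∞) ^ k) ^ r *
          (if (2:ℝ≥0∞) ^ k < latM L μ f x then 1 else 0) ∂μ :=
        lintegral_mono fun x => lower_dyadic r hr0 _
    _ = ∑' k : ℤ, (2 * (2:ℝ≥0∞) ^ k) ^ r * μ {x | (2:ℝ≥0∞) ^ k < latM L μ f x} := by
        rw [lintegral_tsum]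
        · refine tsum_congr fun k => ?_
          have hms : MeasurableSet {x | (2:ℝ≥0∞) ^ k < latM L μ f x} :=
            measurableSet_lt measurable_const hM
          rw [lintegral_const_mul _ (Measurable.ite hms measurable_const measurable_const)]
          congr 1
          rw [← lintegral_indicator_one hms]
          refine lintegral_congr fun x => ?_
          simp [Set.indicator_apply]
        · intro k
          have hms : MeasurableSet {x | (2:ℝ≥0∞) ^ k < latM L μ f x} :=
            measurableSet_lt measurable_const hM
          exact ((Measurable.ite hms measurable_const measurable_const).const_mul _).aemeasurable
    _ ≤ ∑' k : ℤ, A * ∫⁻ x, ((2:ℝ≥0∞) ^ k) ^ (r-1) *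
          (f x * (if (2:ℝ≥0∞)^k < 2 * f x then 1 else 0)) ∂μ := by
        refine ENNReal.tsum_le_tsum fun k => ?_
        have hfm : Measurable (fun x => f x * (if (2:ℝ≥0∞)^k < 2 * f x then (1:ℝ≥0∞) else 0)) :=
          hf.mul (hmi k)
        rw [lintegral_const_mul _ hfm]
        calc _ = A * (((2:ℝ≥0∞) ^ k) ^ (r-1) * (2 ^ k / 2 *
                μ {x | (2:ℝ≥0∞) ^ k < latM L μ f x})) := by
              have e1 : (2 * (2:ℝ≥0∞) ^ k) ^ r = A * (((2:ℝ≥0∞) ^ k) ^ (r-1) * (2 ^ k / 2)) := by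
                rw [ENNReal.mul_rpow_of_nonneg _ _ hr0.le]
                have : ((2:ℝ≥0∞) ^ k) ^ r = ((2:ℝ≥0∞) ^ k) ^ (r-1) * 2 ^ k := by
                  conv_rhs => rw [← ENNReal.rpow_one (2 ^ k), ← ENNReal.rpow_mul, one_mul]
                  rw [← ENNReal.rpow_add _ _ (hpos k).ne' (hlt k).ne]
                  congr 1; ring
                rw [this, ENNReal.div_eq_inv_mul]
                calc _ = (2:ℝ≥0∞) ^ r * (2 * 2⁻¹) * (((2:ℝ≥0∞) ^ k) ^ (r-1) * 2 ^ k) := by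
                      rw [ENNReal.mul_inv_cancel (by simp) (by simp), mul_one]
                  _ = _ := by ring
              rw [e1]; ring
          _ ≤ _ := by
              gcongr
              exact latM_weak L μ hμ f hf _ (hlt k).ne
    _ = A * ∫⁻ x, ∑' k : ℤ, ((2:ℝ≥0∞) ^ k) ^ (r-1) *
          (f x * (if (2:ℝ≥0∞)^k < 2 * f x then 1 else 0)) ∂μ := by
        rw [ENNReal.tsum_mul_left, lintegral_tsum]
        exact fun k => ((hf.mul (hmi k)).const_mul _).aemeasurable
    _ ≤ A * ∫⁻ x, B * f x ^ r ∂μ := by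
        gcongr with x
        by_cases h0 : f x = 0
        · simp [h0]
        by_cases ht : f x = ∞
        · rw [ht, ENNReal.top_rpow_of_pos hr0, ENNReal.mul_top hB0]; exact le_top
        have := upper_dyadic (r-1) (by linarith) (f x) h0 ht
        calc _ = f x * ∑' k : ℤ, ((2:ℝ≥0∞) ^ k) ^ (r-1) *
              (if (2:ℝ≥0∞)^k < 2 * f x then 1 else 0) := by
              rw [← ENNReal.tsum_mul_left]
              exact tsum_congr fun k => by ring
          _ ≤ f x * (B * f x ^ (r-1)) := by gcongr
          _ = B * (f x ^ (r-1) * f x ^ (1:ℝ)) := by rw [ENNReal.rpow_one]; ring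
          _ = _ := by
              rw [← ENNReal.rpow_add _ _ h0 ht]; congr 2; ring
    _ = _ := by
        rw [lintegral_const_mul _ (hf.pow_const r), ← mul_assoc]

theorem lat_sigmaFinite {X : Type*} [MeasurableSpace X] (L : LatticeFamily X) (ν : Measure X)
    (hν : ∀ I ∈ L.sets, ν I < ∞) : SigmaFinite ν := by
  have hc : (L.gen 0).Countable := L.countable 0
  have : ∃ s : ℕ → Set X, (∀ n, ν (s n) < ∞) ∧ ⋃ n, s n = univ := by
    have h := (Set.exists_seq_cover_iff_countable (p := fun s : Set X => ν s < ∞)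
      ⟨∅, by simp⟩).2 ⟨L.gen 0, hc, fun s hs => hν s (Set.mem_iUnion.2 ⟨0, hs⟩), L.cover 0⟩
    exact h
  obtain ⟨s, h1, h2⟩ := this
  exact ⟨⟨⟨s, fun _ => trivial, h1, h2⟩⟩⟩

theorem dual_le {X : Type*} [MeasurableSpace X] (ν : Measure X) [SigmaFinite ν] (r : ℝ)
    (hr : 1 < r) (h : X → ℝ≥0∞) (hh : Measurable h) (S : ℝ≥0∞)
    (hS : ∀ g : X → ℝ≥0∞, Measurable g → ∫⁻ x, g x ^ (r / (r-1)) ∂ν = 1 →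
      ∫⁻ x, h x * g x ∂ν ≤ S) :
    (∫⁻ x, h x ^ r ∂ν) ^ (1 / r) ≤ S := by
  classical
  have hr0 : 0 < r := by linarith
  have hr1 : 0 < r - 1 := by linarith
  set hn : ℕ → X → ℝ≥0∞ := fun n => (spanningSets ν n).indicator fun x => min (h x) n with hhn
  have hm : ∀ n, Measurable (hn n) := fun n =>
    (hh.min measurable_const).indicator (measurableSet_spanningSets ν n)
  have hle : ∀ n x, hn n x ≤ h x := fun n x => by
    simp only [hhn, Set.indicator_apply]; split_ifs <;> simp
  have hA : ∀ n, ∫⁻ x, hn n x ^ r ∂ν < ∞ := by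
    intro n
    calc ∫⁻ x, hn n x ^ r ∂ν ≤ ∫⁻ x, (spanningSets ν n).indicator (fun _ => (n:ℝ≥0∞) ^ r) x ∂ν := by
          refine lintegral_mono fun x => ?_
          simp only [hhn, Set.indicator_apply]
          split_ifs
          · exact ENNReal.rpow_le_rpow (min_le_right _ _) hr0.le
          · simp [hr0]
      _ = (n:ℝ≥0∞) ^ r * ν (spanningSets ν n) :=
          lintegral_indicator_const (measurableSet_spanningSets ν n) _
      _ < ∞ := ENNReal.mul_lt_top (ENNReal.rpow_lt_top_of_nonneg hr0.le (by simp))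
          (measure_spanningSets_lt_top ν n)
  have key : ∀ n, ∫⁻ x, hn n x ^ r ∂ν ≤ S ^ r := by
    intro n
    set A := ∫⁻ x, hn n x ^ r ∂ν with hAdef
    by_cases hA0 : A = 0
    · rw [hA0]; exact zero_le
    have hAt : A ≠ ∞ := (hA n).ne
    have e : ∀ x, (A ^ (-(1 - 1/r)) * hn n x ^ (r-1)) ^ (r / (r-1)) = A⁻¹ * hn n x ^ r := by
      intro x
      rw [ENNReal.mul_rpow_of_nonneg _ _ (by positivity), ← ENNReal.rpow_mul, ← ENNReal.rpow_mul,
        ← ENNReal.rpow_neg_one]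
      congr 2
      · field_simp
      · field_simp
    have h1 := hS (fun x => A ^ (-(1 - 1/r)) * hn n x ^ (r-1))
      (((hm n).pow_const _).const_mul _) (by
        simp only [e]
        rw [lintegral_const_mul _ ((hm n).pow_const _), ENNReal.inv_mul_cancel hA0 hAt])
    have h2 : A ^ (1 / r) ≤ S := by
      calc A ^ (1 / r) = A ^ (-(1 - 1/r)) * A := by
            conv_rhs => rw [← ENNReal.rpow_one A, ← ENNReal.rpow_mul, one_mul]
            rw [← ENNReal.rpow_add _ _ hA0 hAt]
            congr 1; ring
        _ = ∫⁻ x, A ^ (-(1 - 1/r)) * hn n x ^ r ∂ν := by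
            rw [lintegral_const_mul _ ((hm n).pow_const _)]
        _ ≤ ∫⁻ x, h x * (A ^ (-(1 - 1/r)) * hn n x ^ (r-1)) ∂ν := by
            refine lintegral_mono fun x => ?_
            have : hn n x ^ r ≤ h x * hn n x ^ (r-1) := by
              calc hn n x ^ r = hn n x ^ (1 + (r-1)) := by congr 1; ring
                _ = hn n x * hn n x ^ (r-1) := by
                  rw [ENNReal.rpow_add_of_nonneg _ _ (by norm_num) hr1.le, ENNReal.rpow_one]
                _ ≤ _ := by gcongr; exact hle n x
            calc _ ≤ A ^ (-(1 - 1/r)) * (h x * hn n x ^ (r-1)) := by gcongr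
              _ = _ := by ring
        _ ≤ S := h1
    rw [one_div] at h2
    exact (ENNReal.rpow_inv_le_iff hr0).1 h2
  rw [one_div, ENNReal.rpow_inv_le_iff hr0]
  calc ∫⁻ x, h x ^ r ∂ν ≤ ∫⁻ x, ⨆ n, hn n x ^ r ∂ν := by
        refine lintegral_mono fun x => ?_
        dsimp only
        rw [← ENNReal.le_rpow_inv_iff hr0]
        refine le_of_forall_lt fun c hc => ?_
        obtain ⟨d, hcd, hdh⟩ := exists_between hc
        refine hcd.trans_le ?_
        obtain ⟨n0, hn0⟩ := ENNReal.exists_nat_gt (hdh.trans_le le_top).ne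
        have hx : x ∈ ⋃ n, spanningSets ν n := by rw [iUnion_spanningSets]; trivial
        obtain ⟨m, hxm⟩ := Set.mem_iUnion.1 hx
        rw [ENNReal.le_rpow_inv_iff hr0]
        refine le_iSup_of_le (max n0 m) (ENNReal.rpow_le_rpow ?_ hr0.le)
        have hx' := monotone_spanningSets ν (le_max_right n0 m) hxm
        simp only [hhn]
        rw [Set.indicator_of_mem hx']
        refine le_min hdh.le (hn0.le.trans ?_)
        exact_mod_cast le_max_left n0 m
    _ = ⨆ n, ∫⁻ x, hn n x ^ r ∂ν := by
        refine lintegral_iSup (fun n => (hm n).pow_const _) ?_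
        intro n m hnm x
        refine ENNReal.rpow_le_rpow ?_ hr0.le
        simp only [hhn, Set.indicator_apply]
        split_ifs with h1 h2
        · gcongr
        · exact absurd (monotone_spanningSets ν hnm h1) h2
        · exact zero_le
        · exact le_rfl
    _ ≤ S ^ r := iSup_le key

theorem avg_jensen {X : Type*} [MeasurableSpace X] (μ : Measure X) (I : Set X)
    (h0 : 0 < μ I) (ht : μ I < ∞) (q : ℝ) (hq : 1 ≤ q)
    (f : X → ℝ≥0∞) (hf : Measurable f) (x : X) :
    avgOp μ I f x ^ q ≤ avgOp μ I (fun y => f y ^ q) x := by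
  have hq0 : 0 < q := by linarith
  by_cases hx : x ∈ I
  · simp only [avgOp, Set.indicator_of_mem hx]
    have h := eLpNorm'_le_eLpNorm'_mul_rpow_measure_univ (μ := μ.restrict I) (f := f)
      one_pos hq hf.aestronglyMeasurable
    simp only [eLpNorm', enorm_eq_self, ENNReal.rpow_one, Measure.restrict_apply_univ, div_one] at h
    rw [ENNReal.div_rpow_of_nonneg _ _ hq0.le]
    rw [ENNReal.div_le_iff (ENNReal.rpow_pos h0 ht.ne).ne' (ENNReal.rpow_lt_top_of_nonneg hq0.le ht.ne).ne]
    calc _ ≤ ((∫⁻ y in I, f y ^ q ∂μ) ^ (1 / q) * μ I ^ (1 - 1 / q)) ^ q :=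
          ENNReal.rpow_le_rpow h hq0.le
      _ = (∫⁻ y in I, f y ^ q ∂μ) * μ I ^ (q - 1) := by
          rw [ENNReal.mul_rpow_of_nonneg _ _ hq0.le, ← ENNReal.rpow_mul, ← ENNReal.rpow_mul,
            one_div_mul_cancel hq0.ne', ENNReal.rpow_one]
          congr 2; field_simp
      _ = _ := by
          rw [ENNReal.rpow_sub _ _ h0.ne' ht.ne, ENNReal.rpow_one, ENNReal.div_eq_inv_mul,
            ENNReal.div_eq_inv_mul]; ring
  · simp [avgOp, hx, hq0]

theorem maxConst_lt_top (r : ℝ) (hr : 1 < r) :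
    ((2:ℝ≥0∞) ^ r * 2 * ((2:ℝ≥0∞) ^ (r-1) * (1 - ((2:ℝ≥0∞)⁻¹) ^ (r-1))⁻¹)) < ∞ := by
  have h2 : ∀ s : ℝ, 0 ≤ s → (2:ℝ≥0∞) ^ s < ∞ := fun s hs =>
    ENNReal.rpow_lt_top_of_nonneg hs (by simp)
  refine ENNReal.mul_lt_top (ENNReal.mul_lt_top (h2 _ (by linarith)) (by simp))
    (ENNReal.mul_lt_top (h2 _ (by linarith)) ?_)
  rw [ENNReal.inv_lt_top, tsub_pos_iff_lt]
  exact ENNReal.rpow_lt_one (by simp) (by linarith)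

theorem sum_meas {X : Type*} [MeasurableSpace X] (L : LatticeFamily X) (F : Set X → X → ℝ≥0∞)
    (hF : ∀ I ∈ L.sets, Measurable (F I)) : Measurable (fun x => ∑' I : L.sets, F I.1 x) := by
  have : Countable L.sets := (lat_countable L).to_subtype
  exact Measurable.ennreal_tsum fun I => hF I.1 I.2

theorem avg_le_avg_max {X : Type*} [MeasurableSpace X] (L : LatticeFamily X) (μ : Measure X)
    (hμ : ∀ I ∈ L.sets, 0 < μ I ∧ μ I < ∞) (q : ℝ) (hq : 1 ≤ q) (h : X → ℝ≥0∞)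
    (I : Set X) (hI : I ∈ L.sets) (x : X) :
    avgOp μ I h x ≤ avgOp μ I (fun y => latM L μ h y ^ q⁻¹) x ^ q := by
  have hq0 : 0 < q := by linarith
  obtain ⟨h0, ht⟩ := hμ I hI
  by_cases hx : x ∈ I
  · rw [← ENNReal.rpow_inv_le_iff hq0]
    simp only [avgOp, Set.indicator_of_mem hx]
    rw [ENNReal.le_div_iff_mul_le (Or.inl h0.ne') (Or.inl ht.ne), ← setLIntegral_const]
    refine setLIntegral_mono' (lat_meas L I hI) fun y hy => ?_
    refine ENNReal.rpow_le_rpow ?_ (inv_nonneg.2 hq0.le)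
    refine le_trans ?_ (le_iSup (fun J : L.sets => avgOp μ J.1 h y) ⟨I, hI⟩)
    simp only [avgOp, Set.indicator_of_mem hy]; exact le_rfl
  · simp [avgOp, hx]

/-- For `1 ≤ q < p < ∞`, the `q`-th power of the vector-valued operator
norm `N = sup_{‖f‖_{L^p(μ)} = 1} ‖{α_I E_I^μ f}‖_{L^p(ℓ^q,ν)}` is comparable, with constants
depending only on `p, q`, to
`sup_{‖f‖_{L^p(μ)}=1, ‖g‖_{L^{(p/q)'}(ν)}=1} ∫ (∑_I α_I^q E_I^μ(f^q)) g dν`. -/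
theorem operator_norm_comparable_linearized (p q : ℝ) (hq : 1 ≤ q) (hqp : q < p) :
    ∃ c : ℝ≥0∞, 0 < c ∧ c < ∞ ∧
      ∀ (X : Type) [MeasurableSpace X] (L : LatticeFamily X) (μ ν : Measure X),
        (∀ I ∈ L.sets, 0 < μ I ∧ μ I < ∞) → (∀ I ∈ L.sets, ν I < ∞) →
        ∀ α : Set X → ℝ≥0,
        (⨆ f : {f : X → ℝ≥0∞ // Measurable f ∧ ∫⁻ x, f x ^ p ∂μ = 1},
            (∫⁻ x, (∑' I : L.sets, ((α I.1 : ℝ≥0∞) * avgOp μ I.1 f.1 x) ^ q) ^ (p / q) ∂ν)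
              ^ (1 / p)) ^ q
          ≤ c * (⨆ f : {f : X → ℝ≥0∞ // Measurable f ∧ ∫⁻ x, f x ^ p ∂μ = 1},
              ⨆ g : {g : X → ℝ≥0∞ //
                  Measurable g ∧ ∫⁻ x, g x ^ ((p / q) / (p / q - 1)) ∂ν = 1},
                ∫⁻ x, (∑' I : L.sets,
                    (α I.1 : ℝ≥0∞) ^ q * avgOp μ I.1 (fun y => f.1 y ^ q) x) * g.1 x ∂ν) ∧
        (⨆ f : {f : X → ℝ≥0∞ // Measurable f ∧ ∫⁻ x, f x ^ p ∂μ = 1},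
            ⨆ g : {g : X → ℝ≥0∞ //
                Measurable g ∧ ∫⁻ x, g x ^ ((p / q) / (p / q - 1)) ∂ν = 1},
              ∫⁻ x, (∑' I : L.sets,
                  (α I.1 : ℝ≥0∞) ^ q * avgOp μ I.1 (fun y => f.1 y ^ q) x) * g.1 x ∂ν)
          ≤ c * (⨆ f : {f : X → ℝ≥0∞ // Measurable f ∧ ∫⁻ x, f x ^ p ∂μ = 1},
              (∫⁻ x, (∑' I : L.sets,
                  ((α I.1 : ℝ≥0∞) * avgOp μ I.1 f.1 x) ^ q) ^ (p / q) ∂ν) ^ (1 / p)) ^ q := by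
  have hq0 : 0 < q := by linarith
  have hp0 : 0 < p := by linarith
  have hr : 1 < p / q := (one_lt_div hq0).2 hqp
  have hr0 : 0 < p / q := by linarith
  set C : ℝ≥0∞ := ((2:ℝ≥0∞) ^ (p/q) * 2 * ((2:ℝ≥0∞) ^ (p/q-1) *
    (1 - ((2:ℝ≥0∞)⁻¹) ^ (p/q-1))⁻¹)) with hC
  have hCt : C < ∞ := maxConst_lt_top _ hr
  refine ⟨C ^ (q / p) + 1, by positivity,
    ENNReal.add_lt_top.2 ⟨ENNReal.rpow_lt_top_of_nonneg (by positivity) hCt.ne, by simp⟩, ?_⟩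
  intro X _ L μ ν hμ hν α
  have hσ : SigmaFinite ν := lat_sigmaFinite L ν hν
  have eexp : 1 / p * q = 1 / (p / q) := by field_simp
  have hmeas1 : ∀ f : X → ℝ≥0∞, Measurable (fun x => ∑' I : L.sets,
      ((α I.1 : ℝ≥0∞) * avgOp μ I.1 f x) ^ q) := fun f =>
    sum_meas L (fun I x => ((α I : ℝ≥0∞) * avgOp μ I f x) ^ q)
      (fun I hI => ((avgOp_meas μ I (lat_meas L I hI) f).const_mul _).pow_const _)
  have hmeas2 : ∀ f : X → ℝ≥0∞, Measurable (fun x => ∑' I : L.sets,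
      (α I.1 : ℝ≥0∞) ^ q * avgOp μ I.1 f x) := fun f =>
    sum_meas L (fun I x => (α I : ℝ≥0∞) ^ q * avgOp μ I f x)
      (fun I hI => (avgOp_meas μ I (lat_meas L I hI) f).const_mul _)
  constructor
  · refine le_trans ?_ (le_mul_of_one_le_left zero_le le_add_self)
    rw [← ENNReal.le_rpow_inv_iff hq0]
    refine iSup_le fun f => ?_
    obtain ⟨f, hf, hf1⟩ := f
    rw [ENNReal.le_rpow_inv_iff hq0, ← ENNReal.rpow_mul, eexp]
    refine le_trans (ENNReal.rpow_le_rpow (lintegral_mono (g := fun x => (∑' I : L.sets,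
      (α I.1 : ℝ≥0∞) ^ q * avgOp μ I.1 (fun y => f y ^ q) x) ^ (p / q)) fun x => ?_)
      (by positivity)) (dual_le ν (p / q) hr _ (hmeas2 _) _ ?_)
    · refine ENNReal.rpow_le_rpow (ENNReal.tsum_le_tsum fun I => ?_) hr0.le
      rw [ENNReal.mul_rpow_of_nonneg _ _ hq0.le]
      gcongr
      exact avg_jensen μ I.1 (hμ I.1 I.2).1 (hμ I.1 I.2).2 q hq f hf x
    · intro g hg hg1
      exact le_iSup_of_le ⟨f, hf, hf1⟩ (le_iSup_of_le ⟨g, hg, hg1⟩ le_rfl)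
  · refine iSup_le fun f => iSup_le fun g => ?_
    obtain ⟨f, hf, hf1⟩ := f
    obtain ⟨g, hg, hg1⟩ := g
    dsimp only
    set F : X → ℝ≥0∞ := fun y => latM L μ (fun y => f y ^ q) y ^ q⁻¹ with hF
    have hFm : Measurable F := (latM_meas L μ _).pow_const _
    set K := ∫⁻ x, F x ^ p ∂μ with hK
    have hKC : K ≤ C := by
      have h := latM_strong L μ hμ (p / q) hr (fun y => f y ^ q) (hf.pow_const q)
      have e1 : ∀ x, (f x ^ q) ^ (p / q) = f x ^ p := fun x => by
        rw [← ENNReal.rpow_mul]; congr 1; field_simp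
      simp only [e1, hf1, mul_one] at h
      refine le_trans (le_of_eq (lintegral_congr fun x => ?_)) h
      simp only [hF]
      rw [← ENNReal.rpow_mul]; congr 1; field_simp
    have hol : (∫⁻ x, (∑' I : L.sets,
        (α I.1 : ℝ≥0∞) ^ q * avgOp μ I.1 (fun y => f y ^ q) x) * g x ∂ν) ≤
        (∫⁻ x, (∑' I : L.sets,
          (α I.1 : ℝ≥0∞) ^ q * avgOp μ I.1 (fun y => f y ^ q) x) ^ (p/q) ∂ν) ^ (1 / (p / q)) := by
      have h := ENNReal.lintegral_mul_le_Lp_mul_Lq ν (Real.HolderConjugate.conjExponent hr)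
        (hmeas2 (fun y => f y ^ q)).aemeasurable hg.aemeasurable
      simp only [Real.conjExponent, hg1, ENNReal.one_rpow, mul_one] at h
      exact h
    refine hol.trans ?_
    have hle : (∫⁻ x, (∑' I : L.sets,
          (α I.1 : ℝ≥0∞) ^ q * avgOp μ I.1 (fun y => f y ^ q) x) ^ (p/q) ∂ν) ^ (1 / (p / q)) ≤
        (∫⁻ x, (∑' I : L.sets,
          ((α I.1 : ℝ≥0∞) * avgOp μ I.1 F x) ^ q) ^ (p/q) ∂ν) ^ (1 / (p / q)) := by
      refine ENNReal.rpow_le_rpow (lintegral_mono fun x => ENNReal.rpow_le_rpow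
        (ENNReal.tsum_le_tsum fun I => ?_) hr0.le) (by positivity)
      rw [ENNReal.mul_rpow_of_nonneg _ _ hq0.le]
      gcongr
      exact avg_le_avg_max L μ hμ q hq _ I.1 I.2 x
    refine hle.trans ?_
    by_cases hK0 : K = 0
    · have hF0 : F =ᵐ[μ] 0 := by
        rw [hK, lintegral_eq_zero_iff (hFm.pow_const p)] at hK0
        filter_upwards [hK0] with x hx
        simpa [hp0, hp0.le, hp0.not_gt] using hx
      have hav : ∀ I : Set X, ∀ x, avgOp μ I F x = 0 := by
        intro I x
        have : ∫⁻ y in I, F y ∂μ = 0 := by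
          rw [lintegral_congr_ae (ae_restrict_of_ae hF0)]; simp
        simp [avgOp, this]
      have hz : (1:ℝ) / (p / q) > 0 := by positivity
      simp only [hav, mul_zero, ENNReal.zero_rpow_of_pos hq0, tsum_zero,
        ENNReal.zero_rpow_of_pos hr0, lintegral_zero, ENNReal.zero_rpow_of_pos hz]
      exact zero_le
    · have hKt : K ≠ ∞ := (hKC.trans_lt hCt).ne
      set k := K ^ (1 / p) with hk
      have hk0 : k ≠ 0 := (ENNReal.rpow_pos (pos_iff_ne_zero.2 hK0) hKt).ne'
      have hkt : k ≠ ∞ := (ENNReal.rpow_lt_top_of_nonneg (by positivity) hKt).ne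
      set G : X → ℝ≥0∞ := fun x => k⁻¹ * F x with hG
      have hGm : Measurable G := hFm.const_mul _
      have hG1 : ∫⁻ x, G x ^ p ∂μ = 1 := by
        simp only [hG, ENNReal.mul_rpow_of_nonneg _ _ hp0.le]
        rw [lintegral_const_mul _ (hFm.pow_const p), ← hK, ENNReal.inv_rpow, hk,
          ← ENNReal.rpow_mul, one_div_mul_cancel hp0.ne', ENNReal.rpow_one,
          ENNReal.inv_mul_cancel hK0 hKt]
      have hFG : F = fun x => k * G x := by
        funext x
        rw [hG]; dsimp only
        rw [← mul_assoc, ENNReal.mul_inv_cancel hk0 hkt, one_mul]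
      have hav : ∀ I : Set X, ∀ x, avgOp μ I F x = k * avgOp μ I G x := by
        intro I x
        by_cases hx : x ∈ I
        · simp only [avgOp, Set.indicator_of_mem hx]
          rw [hFG, lintegral_const_mul _ hGm, mul_div_assoc]
        · simp [avgOp, hx]
      have hsum : ∀ x, (∑' I : L.sets, ((α I.1 : ℝ≥0∞) * avgOp μ I.1 F x) ^ q) ^ (p / q) =
          (k ^ q) ^ (p / q) *
            (∑' I : L.sets, ((α I.1 : ℝ≥0∞) * avgOp μ I.1 G x) ^ q) ^ (p / q) := by
        intro x
        rw [← ENNReal.mul_rpow_of_nonneg _ _ hr0.le, ← ENNReal.tsum_mul_left]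
        congr 1
        refine tsum_congr fun I => ?_
        rw [hav, ← ENNReal.mul_rpow_of_nonneg _ _ hq0.le]
        congr 1; ring
      simp only [hsum]
      rw [lintegral_const_mul _ ((hmeas1 G).pow_const _),
        ENNReal.mul_rpow_of_nonneg _ _ (by positivity), ← ENNReal.rpow_mul _ (p / q),
        mul_one_div_cancel hr0.ne', ENNReal.rpow_one]
      refine mul_le_mul' ?_ ?_
      · refine le_trans ?_ le_self_add
        rw [hk, ← ENNReal.rpow_mul, show 1 / p * q = q / p by ring]
        exact ENNReal.rpow_le_rpow hKC (by positivity)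
      · rw [← eexp, ENNReal.rpow_mul]
        refine ENNReal.rpow_le_rpow ?_ hq0.le
        exact le_iSup_of_le ⟨G, hGm, hG1⟩ le_rfl
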